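/- Palm variance correction estimate (Lemma 4.7): fix θ with −√2 < θ < √2 and R ∈ ℕ. With x_θ^N = x/N + θ and T = T^N_{r,∞}(x) = { y ∈ ℝ : r/N ≤ |x_θ^N − y| }, one has lim_{r→∞} limsup_{N→∞} sup_{|x| < R} | ∫_T (1/(N |x_θ^N − y|²)) · L^N(x_θ^N, y)² / L^N(x_θ^N, x_θ^N) dy + ∬_{T × T} (1/((x_θ^N − y)(x_θ^N − z))) · { 2 L^N(y,z) L^N(x_θ^N, y) L^N(x_θ^N, z) / L^N(x_θ^N, x_θ^N) − L^N(x_θ^N, y)² L^N(x_θ^N, z)² / L^N(x_θ^N, x_θ^N)² } dy dz | = 0. -/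

import Mathlib

open Real MeasureTheory Filter Set

/-- Physicists' Hermite polynomial `H_n(x) = (-1)^n e^{x^2} (d/dx)^n e^{-x^2}`. -/
noncomputable def hermiteP (n : ℕ) (x : ℝ) : ℝ :=
  (-1 : ℝ) ^ n * Real.exp (x ^ 2) * iteratedDeriv n (fun t => Real.exp (-t ^ 2)) x

/-- Oscillator wave function `ψ_n(x) = (√π 2^n n!)^{-1/2} e^{-x^2/2} H_n(x)`. -/
noncomputable def osc (n : ℕ) (x : ℝ) : ℝ :=
  (Real.sqrt (Real.sqrt Real.pi * 2 ^ n * (n.factorial : ℝ)))⁻¹ *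
    Real.exp (-x ^ 2 / 2) * hermiteP n x

/-- The kernel `K^N(x,y) = Σ_{k=0}^{N-1} ψ_k(x) ψ_k(y)`. -/
noncomputable def kerK (N : ℕ) (x y : ℝ) : ℝ :=
  ∑ k ∈ Finset.range N, osc k x * osc k y

/-- The rescaled kernel `L^N(x,y) = N^{-1/2} K^N(√N x, √N y)`. -/
noncomputable def kerL (N : ℕ) (x y : ℝ) : ℝ :=
  (Real.sqrt (N : ℝ))⁻¹ * kerK N (Real.sqrt (N : ℝ) * x) (Real.sqrt (N : ℝ) * y)

/-!
On `T` the weight `w y = 1 / (N (a - y))` is at most `1 / r` in absolute value. Let `P = N * L^N`,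
the kernel of the orthogonal projection of `L²(ℝ)` onto the span of the first `N` oscillator
functions, dilated by `√N`, and let `h y = P a y / √(P a a)`. This is a unit vector because `P`
reproduces itself. With `w` extended by `0` outside `T`, the expression to be estimated equals
`‖w h‖² + 2 ⟪w h, P (w h)⟫ - ⟪h, w h⟫²`. Bessel's inequality gives
`0 ≤ ⟪w h, P (w h)⟫ ≤ ‖w h‖² ≤ 1 / r²`, and `|⟪h, w h⟫| ≤ 1 / r`, so its absolute value is at most
`3 / r²`, uniformly in `N` and in the base point `a`.
-/

section Hermite

open Polynomial

lemma integrable_aeval_mul_gaussian {R : Type*} [CommSemiring R] [Algebra R ℝ] (p : R[X]) :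
    Integrable fun x : ℝ => aeval x p * exp (-(x ^ 2 / 2)) := by
  induction p using Polynomial.induction_on' with
  | add p q hp hq => exact (hp.add hq).congr (.of_forall fun x => by simp [add_mul])
  | monomial n c =>
    have hmoment := integrable_rpow_mul_exp_neg_mul_sq (b := 1 / 2) one_half_pos
      (s := n) (by linarith [n.cast_nonneg (α := ℝ)])
    refine (hmoment.const_mul (algebraMap R ℝ c)).congr (.of_forall fun x => ?_)
    simp only [aeval_monomial, rpow_natCast, mul_assoc]
    ring_nf

lemma hasDerivAt_hermite_mul_gaussian (n : ℕ) (x : ℝ) :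
    HasDerivAt (fun x : ℝ => aeval x (hermite n) * exp (-(x ^ 2 / 2)))
      (-(aeval x (hermite (n + 1)) * exp (-(x ^ 2 / 2)))) x := by
  have hgauss : HasDerivAt (fun x : ℝ => exp (-(x ^ 2 / 2))) (exp (-(x ^ 2 / 2)) * -x) x := by
    simpa using (((hasDerivAt_pow 2 x).div_const 2).neg).exp
  refine (((hermite n).hasDerivAt_aeval x).mul hgauss).congr_deriv ?_
  rw [hermite_succ, map_sub, map_mul, aeval_X]
  ring

variable {R : Type*} [CommRing R] [Algebra R ℝ]

lemma integrable_aeval_mul_hermite_mul_gaussian (p : R[X]) (n : ℕ) :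
    Integrable fun x : ℝ => aeval x p * (aeval x (hermite n) * exp (-(x ^ 2 / 2))) := by
  refine (integrable_aeval_mul_gaussian (p * (hermite n).map (algebraMap ℤ R))).congr
    (.of_forall fun x => ?_)
  simp only [map_mul, aeval_map_algebraMap, mul_assoc]

lemma integral_aeval_mul_hermite_mul_gaussian (p : R[X]) (n : ℕ) :
    ∫ x : ℝ, aeval x p * (aeval x (hermite n) * exp (-(x ^ 2 / 2))) =
      ∫ x : ℝ, aeval x (derivative^[n] p) * exp (-(x ^ 2 / 2)) := by
  induction n generalizing p with
  | zero => simp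
  | succ n ih =>
    have hparts := integral_mul_deriv_eq_deriv_mul_of_integrable
      (fun x _ => p.hasDerivAt_aeval x) (fun x _ => hasDerivAt_hermite_mul_gaussian n x)
      ((integrable_aeval_mul_hermite_mul_gaussian p (n + 1)).neg.congr
        (.of_forall fun x => (mul_neg _ _).symm))
      (integrable_aeval_mul_hermite_mul_gaussian (derivative p) n)
      (integrable_aeval_mul_hermite_mul_gaussian p n)
    simp only [mul_neg, integral_neg, neg_inj] at hparts
    rw [hparts, ih, Function.iterate_succ_apply]

lemma iterate_derivative_hermite_self (n : ℕ) :
    derivative^[n] (hermite n) = C (n.factorial : ℤ) := by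
  have hdeg : (derivative^[n] (hermite n)).natDegree ≤ 0 := by
    simpa using natDegree_iterate_derivative (hermite n) n
  rw [eq_C_of_natDegree_le_zero hdeg, coeff_iterate_derivative, zero_add, coeff_hermite_self,
    Nat.descFactorial_self, nsmul_one]

lemma integral_hermite_mul_hermite_mul_gaussian (m n : ℕ) :
    ∫ x : ℝ, aeval x (hermite m) * (aeval x (hermite n) * exp (-(x ^ 2 / 2))) =
      if m = n then √(2 * π) * n.factorial else 0 := by
  wlog hmn : m ≤ n generalizing m n
  · have hne : m ≠ n := fun h => hmn h.le
    simpa only [mul_left_comm, hne, hne.symm, if_false] using this n m (le_of_not_ge hmn)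
  rw [integral_aeval_mul_hermite_mul_gaussian]
  rcases hmn.lt_or_eq with hlt | rfl
  · rw [iterate_derivative_eq_zero (by rwa [natDegree_hermite]), if_neg hlt.ne]
    simp
  · have hgauss : ∫ x : ℝ, exp (-(x ^ 2 / 2)) = √(2 * π) := by
      convert integral_gaussian (1 / 2) using 3 <;> ring_nf
    rw [iterate_derivative_hermite_self, if_pos rfl]
    simp only [aeval_C, integral_const_mul, hgauss]
    simp [mul_comm]

lemma hermiteP_eq_aeval_hermite (n : ℕ) (x : ℝ) :
    hermiteP n x = √2 ^ n * aeval (√2 * x) (hermite n) := by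
  have hgauss : (fun t : ℝ => exp (-t ^ 2)) = fun t => exp (-((√2 * t) ^ 2 / 2)) := by
    ext t
    rw [mul_pow, sq_sqrt zero_le_two, mul_div_cancel_left₀ _ two_ne_zero]
  have hderiv := congrFun (iteratedDeriv_comp_const_mul (n := n)
    (f := fun t : ℝ => exp (-(t ^ 2 / 2))) (by fun_prop) (√2)) x
  rw [hermiteP, hgauss, hderiv, iteratedDeriv_eq_iterate, hermite_eq_deriv_gaussian', mul_pow,
    sq_sqrt zero_le_two, mul_div_cancel_left₀ _ two_ne_zero]
  ring

lemma osc_mul_osc (j k : ℕ) (x : ℝ) : osc j x * osc k x =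
    √(√π * 2 ^ j * j.factorial)⁻¹ * √(√π * 2 ^ k * k.factorial)⁻¹ * (√2 ^ j * √2 ^ k) *
      (aeval (√2 * x) (hermite j) * (aeval (√2 * x) (hermite k) * exp (-((√2 * x) ^ 2 / 2)))) := by
  have hgauss : exp (-((√2 * x) ^ 2 / 2)) = exp (-x ^ 2 / 2) * exp (-x ^ 2 / 2) := by
    rw [← exp_add, mul_pow, sq_sqrt zero_le_two]
    ring_nf
  rw [osc, osc, hermiteP_eq_aeval_hermite, hermiteP_eq_aeval_hermite, hgauss, sqrt_inv, sqrt_inv]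
  ring

lemma continuous_osc (k : ℕ) : Continuous (osc k) := by
  unfold osc
  simp only [hermiteP_eq_aeval_hermite]
  fun_prop

lemma memLp_osc (k : ℕ) : MemLp (osc k) 2 := by
  refine (memLp_two_iff_integrable_sq (continuous_osc k).aestronglyMeasurable).2 ?_
  simp only [sq (osc k _), osc_mul_osc]
  exact ((integrable_aeval_mul_hermite_mul_gaussian (hermite k) k).comp_mul_left'
    (sqrt_ne_zero'.2 two_pos)).const_mul _

lemma integral_osc_mul_osc (j k : ℕ) : ∫ x, osc j x * osc k x = if j = k then 1 else 0 := by
  simp only [osc_mul_osc]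
  rw [integral_const_mul, Measure.integral_comp_mul_left
    (fun u : ℝ => aeval u (hermite j) * (aeval u (hermite k) * exp (-(u ^ 2 / 2)))),
    integral_hermite_mul_hermite_mul_gaussian]
  rcases eq_or_ne j k with rfl | hjk
  · have hpow : √2 ^ j * √2 ^ j = (2 : ℝ) ^ j := by rw [← mul_pow, mul_self_sqrt zero_le_two]
    rw [if_pos rfl, if_pos rfl, mul_self_sqrt (by positivity), hpow, abs_of_pos (by positivity),
      sqrt_mul zero_le_two, smul_eq_mul]
    field_simp
  · simp [hjk]

end Hermite

section OrthonormalFunctions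

variable {α ι : Type*}

/-- The kernel `(x, y) ↦ ∑ i ∈ s, e i x * e i y`. When the functions `e i` are orthonormal in `L²`,
it is the integral kernel of the orthogonal projection onto their span. -/
def projKernel (s : Finset ι) (e : ι → α → ℝ) (x y : α) : ℝ :=
  ∑ i ∈ s, e i x * e i y

variable {s : Finset ι} {e : ι → α → ℝ}

lemma projKernel_self_nonneg (a : α) : 0 ≤ projKernel s e a a :=
  Finset.sum_nonneg fun _ _ => mul_self_nonneg _

variable [MeasurableSpace α] {μ : Measure α}

lemma inner_toLp_toLp {f g : α → ℝ} (hf : MemLp f 2 μ) (hg : MemLp g 2 μ) :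
    inner ℝ hf.toLp hg.toLp = ∫ x, f x * g x ∂μ := by
  rw [L2.inner_def]
  refine integral_congr_ae ?_
  filter_upwards [hf.coeFn_toLp, hg.coeFn_toLp] with x hfx hgx
  rw [hfx, hgx, RCLike.inner_apply, conj_trivial, mul_comm]

lemma orthonormal_toLp_iff [DecidableEq ι] (he : ∀ i, MemLp (e i) 2 μ) :
    Orthonormal ℝ (fun i => (he i).toLp) ↔
      ∀ i j, ∫ x, e i x * e j x ∂μ = if i = j then 1 else 0 := by
  simp only [orthonormal_iff_ite, inner_toLp_toLp]

lemma memLp_projKernel (he : ∀ i, MemLp (e i) 2 μ) (a : α) : MemLp (projKernel s e a) 2 μ :=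
  memLp_finsetSum _ fun i _ => (he i).const_mul (e i a)

lemma integral_projKernel_sq (he : ∀ i, MemLp (e i) 2 μ)
    (hon : Orthonormal ℝ fun i => (he i).toLp) (a : α) :
    ∫ y, projKernel s e a y ^ 2 ∂μ = projKernel s e a a := by
  classical
  have hmul (i j : ι) : Integrable (fun y => e i a * e j a * (e i y * e j y)) μ :=
    ((he i).integrable_mul (he j)).const_mul _
  have hsq (y : α) : projKernel s e a y ^ 2 =
      ∑ i ∈ s, ∑ j ∈ s, e i a * e j a * (e i y * e j y) := by
    simp only [projKernel, sq, Finset.sum_mul_sum, mul_mul_mul_comm]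
  simp_rw [hsq]
  rw [integral_finsetSum _ fun i _ => integrable_finsetSum _ fun j _ => hmul i j]
  refine Finset.sum_congr rfl fun i hi => ?_
  rw [integral_finsetSum _ fun j _ => hmul i j]
  simp [integral_const_mul, (orthonormal_toLp_iff he).1 hon, hi]

lemma sum_sq_setIntegral_mul_le (he : ∀ i, MemLp (e i) 2 μ)
    (hon : Orthonormal ℝ fun i => (he i).toLp) {T : Set α} (hT : MeasurableSet T)
    {f : α → ℝ} (hf : MemLp f 2 (μ.restrict T)) :
    ∑ i ∈ s, (∫ y in T, e i y * f y ∂μ) ^ 2 ≤ ∫ y in T, f y ^ 2 ∂μ := by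
  have hfT : MemLp (T.indicator f) 2 μ := (memLp_indicator_iff_restrict hT).2 hf
  have hbessel := hon.sum_inner_products_le hfT.toLp (s := s)
  have hnorm : ‖hfT.toLp‖ ^ 2 = ∫ y in T, f y ^ 2 ∂μ := by
    rw [← real_inner_self_eq_norm_sq, inner_toLp_toLp, ← integral_indicator hT]
    simp only [← indicator_mul, sq]
  simpa only [hnorm, inner_toLp_toLp, norm_eq_abs, sq_abs, ← indicator_mul_right,
    integral_indicator hT] using hbessel

lemma integral_integral_projKernel_sub {ν : Measure α} (he : ∀ i, MemLp (e i) 2 ν)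
    {f u : α → ℝ} (hf : MemLp f 2 ν) (hu : Integrable u ν) (b c : ℝ) :
    ∫ y, ∫ z, (b * (f y * f z * projKernel s e y z) - c * (u y * u z)) ∂ν ∂ν =
      b * ∑ i ∈ s, (∫ y, e i y * f y ∂ν) ^ 2 - c * (∫ y, u y ∂ν) ^ 2 := by
  have hef (i : ι) : Integrable (fun y => e i y * f y) ν := (he i).integrable_mul hf
  have hexpand (y z : α) : b * (f y * f z * projKernel s e y z) - c * (u y * u z) =
      ∑ i ∈ s, b * (e i y * f y) * (e i z * f z) - c * u y * u z := by
    rw [projKernel, Finset.mul_sum, Finset.mul_sum, mul_assoc c]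
    congr! 2
    ring
  have hinner (y : α) : ∫ z, (b * (f y * f z * projKernel s e y z) - c * (u y * u z)) ∂ν =
      ∑ i ∈ s, b * (∫ z, e i z * f z ∂ν) * (e i y * f y) - c * (∫ z, u z ∂ν) * u y := by
    simp_rw [hexpand]
    rw [integral_sub (integrable_finsetSum _ fun i _ => (hef i).const_mul _) (hu.const_mul _),
      integral_finsetSum _ fun i _ => (hef i).const_mul _]
    simp only [integral_const_mul, mul_right_comm]
  simp_rw [hinner]
  rw [integral_sub (integrable_finsetSum _ fun i _ => (hef i).const_mul _) (hu.const_mul _),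
    integral_finsetSum _ fun i _ => (hef i).const_mul _]
  simp only [integral_const_mul, Finset.mul_sum, sq, mul_assoc]

variable {T : Set α} {w : α → ℝ} {M : ℝ}

lemma setIntegral_weight_mul_projKernel_sq_le (he : ∀ i, MemLp (e i) 2 μ)
    (hon : Orthonormal ℝ fun i => (he i).toLp) (hT : MeasurableSet T)
    (hwM : ∀ y ∈ T, |w y| ≤ M) (a : α) :
    ∫ y in T, (w y * projKernel s e a y) ^ 2 ∂μ ≤ M ^ 2 * projKernel s e a a := by
  have hdom : Integrable (fun y => M ^ 2 * projKernel s e a y ^ 2) μ :=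
    (memLp_projKernel he a).integrable_sq.const_mul _
  calc ∫ y in T, (w y * projKernel s e a y) ^ 2 ∂μ
      ≤ ∫ y in T, M ^ 2 * projKernel s e a y ^ 2 ∂μ := by
        refine integral_mono_of_nonneg (.of_forall fun y => sq_nonneg _) hdom.integrableOn ?_
        filter_upwards [ae_restrict_mem hT] with y hy
        rw [mul_pow, ← sq_abs (w y)]
        gcongr
        exact hwM y hy
    _ ≤ ∫ y, M ^ 2 * projKernel s e a y ^ 2 ∂μ :=
        setIntegral_le_integral hdom (.of_forall fun y => by positivity)
    _ = M ^ 2 * projKernel s e a a := by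
        rw [integral_const_mul, integral_projKernel_sq he hon]

lemma abs_setIntegral_weight_mul_projKernel_sq_le (he : ∀ i, MemLp (e i) 2 μ)
    (hon : Orthonormal ℝ fun i => (he i).toLp) (hT : MeasurableSet T)
    (hM : 0 ≤ M) (hwM : ∀ y ∈ T, |w y| ≤ M) (a : α) :
    |∫ y in T, w y * projKernel s e a y ^ 2 ∂μ| ≤ M * projKernel s e a a := by
  have hdom : Integrable (fun y => M * projKernel s e a y ^ 2) μ :=
    (memLp_projKernel he a).integrable_sq.const_mul _
  calc |∫ y in T, w y * projKernel s e a y ^ 2 ∂μ|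
      ≤ ∫ y in T, M * projKernel s e a y ^ 2 ∂μ := by
        rw [← norm_eq_abs]
        refine norm_integral_le_of_norm_le hdom.integrableOn ?_
        filter_upwards [ae_restrict_mem hT] with y hy
        rw [norm_eq_abs, abs_mul, abs_sq]
        gcongr
        exact hwM y hy
    _ ≤ ∫ y, M * projKernel s e a y ^ 2 ∂μ :=
        setIntegral_le_integral hdom (.of_forall fun y => by positivity)
    _ = M * projKernel s e a a := by
        rw [integral_const_mul, integral_projKernel_sq he hon]

lemma palm_correction_projKernel_eq {ν : Measure α} (he : ∀ i, MemLp (e i) 2 ν)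
    (hw : MemLp w ⊤ ν) (a : α) :
    (∫ y, w y ^ 2 * (projKernel s e a y ^ 2 / projKernel s e a a) ∂ν) +
        ∫ y, ∫ z, w y * w z *
          (2 * projKernel s e y z * projKernel s e a y * projKernel s e a z / projKernel s e a a -
            projKernel s e a y ^ 2 * projKernel s e a z ^ 2 / projKernel s e a a ^ 2) ∂ν ∂ν =
      (∫ y, (w y * projKernel s e a y) ^ 2 ∂ν) / projKernel s e a a +
        (2 * ((∑ i ∈ s, (∫ y, e i y * (w y * projKernel s e a y) ∂ν) ^ 2) / projKernel s e a a) -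
          ((∫ y, w y * projKernel s e a y ^ 2 ∂ν) / projKernel s e a a) ^ 2) := by
  set P := projKernel s e with hPdef
  have hP : MemLp (P a) 2 ν := memLp_projKernel he a
  have hwP : MemLp (fun y => w y * P a y) 2 ν := hP.mul' hw
  have hwP2 : Integrable (fun y => w y * P a y ^ 2) ν :=
    ((hwP.integrable_mul hP)).congr (.of_forall fun y => by simp only [Pi.mul_apply]; ring)
  have hdouble := integral_integral_projKernel_sub (s := s) he hwP hwP2 (2 / P a a) (P a a ^ 2)⁻¹
  rw [← hPdef] at hdouble
  congr 1
  · simp only [mul_pow, ← mul_div_assoc, integral_div]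
  · calc _ = ∫ y, ∫ z, (2 / P a a * (w y * P a y * (w z * P a z) * P y z) -
          (P a a ^ 2)⁻¹ * (w y * P a y ^ 2 * (w z * P a z ^ 2))) ∂ν ∂ν := by
          congr! 4 with y z
          ring
      _ = _ := by
          rw [hdouble]
          ring

theorem abs_palm_correction_projKernel_le (he : ∀ i, MemLp (e i) 2 μ)
    (hon : Orthonormal ℝ fun i => (he i).toLp) (hT : MeasurableSet T)
    (hw : AEStronglyMeasurable w (μ.restrict T)) (hM : 0 ≤ M) (hwM : ∀ y ∈ T, |w y| ≤ M) (a : α) :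
    |(∫ y in T, w y ^ 2 * (projKernel s e a y ^ 2 / projKernel s e a a) ∂μ) +
        ∫ y in T, ∫ z in T, w y * w z *
          (2 * projKernel s e y z * projKernel s e a y * projKernel s e a z / projKernel s e a a -
            projKernel s e a y ^ 2 * projKernel s e a z ^ 2 / projKernel s e a a ^ 2) ∂μ ∂μ| ≤
      3 * M ^ 2 := by
  have heT (i : ι) : MemLp (e i) 2 (μ.restrict T) := (he i).restrict T
  have hwT : MemLp w ⊤ (μ.restrict T) :=
    memLp_top_of_bound hw M ((ae_restrict_mem hT).mono hwM)
  have hP : 0 ≤ projKernel s e a a := projKernel_self_nonneg a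
  rw [palm_correction_projKernel_eq heT hwT]
  set A := ∫ y in T, (w y * projKernel s e a y) ^ 2 ∂μ
  set S := ∑ i ∈ s, (∫ y in T, e i y * (w y * projKernel s e a y) ∂μ) ^ 2
  set B := ∫ y in T, w y * projKernel s e a y ^ 2 ∂μ
  have hA : A / projKernel s e a a ≤ M ^ 2 :=
    div_le_of_le_mul₀ hP (sq_nonneg M) (setIntegral_weight_mul_projKernel_sq_le he hon hT hwM a)
  have hSA : S ≤ A :=
    sum_sq_setIntegral_mul_le he hon hT ((memLp_projKernel heT a).mul' hwT)
  have hS : S / projKernel s e a a ≤ M ^ 2 := (div_le_div_of_nonneg_right hSA hP).trans hA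
  have hB : (B / projKernel s e a a) ^ 2 ≤ M ^ 2 := by
    rw [sq_le_sq, abs_div, abs_of_nonneg hP, abs_of_nonneg hM]
    exact div_le_of_le_mul₀ hP hM (abs_setIntegral_weight_mul_projKernel_sq_le he hon hT hM hwM a)
  have hA₀ : 0 ≤ A / projKernel s e a a := by positivity
  have hS₀ : 0 ≤ S / projKernel s e a a := by positivity
  have hB₀ : 0 ≤ (B / projKernel s e a a) ^ 2 := sq_nonneg _
  rw [abs_le]
  constructor <;> linarith

end OrthonormalFunctions

/-- The dilation `x ↦ √c * f (c * x)`, normalised so as to preserve `L²` inner products. -/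
noncomputable def dilate (c : ℝ) (f : ℝ → ℝ) (x : ℝ) : ℝ :=
  √c * f (c * x)

lemma memLp_dilate {c : ℝ} (hc : 0 < c) {f : ℝ → ℝ} {p : ENNReal} (hf : MemLp f p) :
    MemLp (dilate c f) p := by
  refine MemLp.const_mul (MemLp.comp_of_map (f := (c * ·)) ?_ (by fun_prop)) _
  rw [map_volume_mul_left hc.ne']
  exact hf.smul_measure ENNReal.ofReal_ne_top

lemma integral_dilate_mul_dilate {c : ℝ} (hc : 0 < c) (f g : ℝ → ℝ) :
    ∫ x, dilate c f x * dilate c g x = ∫ x, f x * g x := by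
  have hmul (x : ℝ) : dilate c f x * dilate c g x = c * (f (c * x) * g (c * x)) := by
    rw [dilate, dilate, mul_mul_mul_comm, mul_self_sqrt hc.le]
  simp_rw [hmul]
  rw [integral_const_mul, Measure.integral_comp_mul_left (fun x => f x * g x), abs_inv,
    abs_of_pos hc, smul_eq_mul, mul_inv_cancel_left₀ hc.ne']

lemma kerL_eq_projKernel_dilate (N : ℕ) (x y : ℝ) :
    kerL N x y = (N : ℝ)⁻¹ * projKernel (Finset.range N) (fun k => dilate √N (osc k)) x y := by
  have hmul (k : ℕ) : dilate √N (osc k) x * dilate √N (osc k) y =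
      √N * (osc k (√N * x) * osc k (√N * y)) := by
    rw [dilate, dilate, mul_mul_mul_comm, mul_self_sqrt (sqrt_nonneg _)]
  simp only [kerL, kerK, projKernel, hmul, ← Finset.mul_sum]
  rw [← sqrt_div_self, div_eq_inv_mul, mul_assoc]

theorem palm_variance_correction_general {N : ℕ} (hN : 0 < N) {r : ℝ} (hr : 0 < r) (a : ℝ) :
    |(∫ y in {y : ℝ | r / (N : ℝ) ≤ |a - y|},
          (1 / ((N : ℝ) * |a - y| ^ 2)) * (kerL N a y ^ 2 / kerL N a a)) +
        (∫ y in {y : ℝ | r / (N : ℝ) ≤ |a - y|}, ∫ z in {z : ℝ | r / (N : ℝ) ≤ |a - z|},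
          (1 / ((a - y) * (a - z))) *
            (2 * kerL N y z * kerL N a y * kerL N a z / kerL N a a -
              kerL N a y ^ 2 * kerL N a z ^ 2 / kerL N a a ^ 2))| ≤ 3 / r ^ 2 := by
  have hN' : (0 : ℝ) < N := Nat.cast_pos.2 hN
  have hsqrt : 0 < √(N : ℝ) := sqrt_pos.2 hN'
  have he (k : ℕ) : MemLp (dilate √N (osc k)) 2 := memLp_dilate hsqrt (memLp_osc k)
  have hon : Orthonormal ℝ fun k => (he k).toLp := (orthonormal_toLp_iff he).2 fun j k => by
    rw [integral_dilate_mul_dilate hsqrt, integral_osc_mul_osc]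
  set P := projKernel (Finset.range N) fun k => dilate √N (osc k) with hPdef
  set T : Set ℝ := {y : ℝ | r / (N : ℝ) ≤ |a - y|}
  have hT : MeasurableSet T := measurableSet_le measurable_const (by fun_prop)
  have hw : Measurable fun y : ℝ => (N * (a - y))⁻¹ := by fun_prop
  have hwM : ∀ y ∈ T, |(N * (a - y))⁻¹| ≤ r⁻¹ := fun y hy => by
    rw [abs_inv, abs_mul, abs_of_pos hN']
    exact inv_anti₀ hr ((div_le_iff₀' hN').1 hy)
  have hbound := abs_palm_correction_projKernel_le (s := Finset.range N) he hon hT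
    hw.aestronglyMeasurable (inv_nonneg.2 hr.le) hwM a
  have hsingle (y : ℝ) : 1 / (N * |a - y| ^ 2) * (kerL N a y ^ 2 / kerL N a a) =
      (N * (a - y))⁻¹ ^ 2 * (P a y ^ 2 / P a a) := by
    simp only [kerL_eq_projKernel_dilate, ← hPdef, sq_abs, div_eq_mul_inv, mul_inv, inv_inv]
    field_simp
  have hdouble (y z : ℝ) : 1 / ((a - y) * (a - z)) *
        (2 * kerL N y z * kerL N a y * kerL N a z / kerL N a a -
          kerL N a y ^ 2 * kerL N a z ^ 2 / kerL N a a ^ 2) =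
      (N * (a - y))⁻¹ * (N * (a - z))⁻¹ *
        (2 * P y z * P a y * P a z / P a a - P a y ^ 2 * P a z ^ 2 / P a a ^ 2) := by
    simp only [kerL_eq_projKernel_dilate, ← hPdef]
    field_simp
  simp_rw [hsingle, hdouble]
  rwa [inv_pow, ← div_eq_mul_inv] at hbound

/-- Palm variance correction estimate (Lemma 4.7). -/
theorem palm_variance_correction (θ : ℝ) (hθ1 : -Real.sqrt 2 < θ) (hθ2 : θ < Real.sqrt 2)
    (R : ℕ) (hR : 1 ≤ R) :
    ∀ ε : ℝ, 0 < ε → ∃ r0 : ℝ, ∀ r : ℝ, r0 ≤ r → ∃ N0 : ℕ, ∀ N : ℕ, N0 ≤ N →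
      ∀ x : ℝ, |x| < (R : ℝ) →
      |(∫ y in {y : ℝ | r / (N : ℝ) ≤ |x / (N : ℝ) + θ - y|},
          (1 / ((N : ℝ) * |x / (N : ℝ) + θ - y| ^ 2)) *
            (kerL N (x / (N : ℝ) + θ) y ^ 2 /
              kerL N (x / (N : ℝ) + θ) (x / (N : ℝ) + θ))) +
        (∫ y in {y : ℝ | r / (N : ℝ) ≤ |x / (N : ℝ) + θ - y|},
          ∫ z in {z : ℝ | r / (N : ℝ) ≤ |x / (N : ℝ) + θ - z|},
            (1 / ((x / (N : ℝ) + θ - y) * (x / (N : ℝ) + θ - z))) *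
              (2 * kerL N y z * kerL N (x / (N : ℝ) + θ) y * kerL N (x / (N : ℝ) + θ) z /
                  kerL N (x / (N : ℝ) + θ) (x / (N : ℝ) + θ) -
                kerL N (x / (N : ℝ) + θ) y ^ 2 * kerL N (x / (N : ℝ) + θ) z ^ 2 /
                  kerL N (x / (N : ℝ) + θ) (x / (N : ℝ) + θ) ^ 2))| < ε := by
  intro ε hε
  have hdecay : ∀ᶠ r : ℝ in atTop, 3 / r ^ 2 < ε :=
    (tendsto_const_nhds.div_atTop (tendsto_pow_atTop two_ne_zero)).eventually_lt_const hε
  obtain ⟨r₀, hr₀⟩ := eventually_atTop.1 (hdecay.and (eventually_gt_atTop 0))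
  exact ⟨r₀, fun r hr => ⟨1, fun N hN x _ =>
    (palm_variance_correction_general hN (hr₀ r hr).2 (x / N + θ)).trans_lt (hr₀ r hr).1⟩⟩
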